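/- arXiv:2407.21175 — 2 statements merged into one kernel-verified Lean document; each statement's English description precedes it below -/
import Mathlib

section
/- There is a ring isomorphism from Z(n) to its opposite ring Z(n)^op sending each generator z_{i,j} (1 ≤ i < j ≤ n) to the corresponding element z_{i,j} of the opposite ring; in other words, the identity on generators extends to an involutory anti-automorphism of Z(n) reversing the order of multiplication. -/
/-- Index type for the generators `z_{i,j}`, `1 ≤ i < j ≤ n`. -/
abbrev ZIdx (n : ℕ) := {p : ℕ × ℕ // 1 ≤ p.1 ∧ p.1 < p.2 ∧ p.2 ≤ n}

/-- The element `z_{i,j}` of the free algebra, with the conventions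
`z_{a,b} = (-1)^(a-b) z_{b,a}` for `a > b` and `z_{a,a} = 1`. -/
noncomputable def zf (n : ℕ) (i j : ℕ) : FreeAlgebra ℤ (ZIdx n) :=
  if h : 1 ≤ i ∧ i < j ∧ j ≤ n then FreeAlgebra.ι ℤ ⟨(i, j), h⟩
  else if h : 1 ≤ j ∧ j < i ∧ i ≤ n then ((-1 : ℤ) ^ (i - j)) • FreeAlgebra.ι ℤ ⟨(j, i), h⟩
  else if i = j then 1 else 0

/-- The defining relations of the ring `Z(n)`. -/
inductive ZRel (n : ℕ) : FreeAlgebra ℤ (ZIdx n) → FreeAlgebra ℤ (ZIdx n) → Prop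
  | contain (i j i' j' : ℕ) (h1 : 1 ≤ i) (h2 : i < j) (h3 : j ≤ n)
      (h1' : 1 ≤ i') (h2' : i' < j') (h3' : j' ≤ n)
      (hsub : Set.Icc i' j' ⊆ Set.Icc i j) :
      ZRel n (zf n i j * zf n i' j')
        (((-1 : ℤ) ^ ((j - i) * (j' - i'))) • (zf n (i + j - i') (i + j - j') * zf n i j))
  | disj (i j i' j' : ℕ) (h1 : 1 ≤ i) (h2 : i < j) (h3 : j ≤ n)
      (h1' : 1 ≤ i') (h2' : i' < j') (h3' : j' ≤ n)
      (hd : Set.Icc i j ∩ Set.Icc i' j' = ∅) :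
      ZRel n (zf n i j * zf n i' j')
        (((-1 : ℤ) ^ ((j - i) * (j' - i'))) • (zf n i' j' * zf n i j))
  | overlap (i j i' j' : ℕ) (h1 : 1 ≤ i) (h2 : i < j) (h3 : j ≤ n)
      (h1' : 1 ≤ i') (h2' : i' < j') (h3' : j' ≤ n)
      (hne : (Set.Icc i j ∩ Set.Icc i' j').Nonempty)
      (hnc1 : ¬ Set.Icc i' j' ⊆ Set.Icc i j) (hnc2 : ¬ Set.Icc i j ⊆ Set.Icc i' j') :
      ZRel n (zf n i j * zf n i' j') 0

/-- The ring `Z(n)`. -/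
abbrev Zring (n : ℕ) := RingQuot (ZRel n)

/-- The image of the generator `z_{i,j}` in `Z(n)`. -/
noncomputable def zElem (n : ℕ) (i j : ℕ) : Zring n :=
  RingQuot.mkRingHom (ZRel n) (zf n i j)

theorem map_sgn {n : ℕ} {R : Type*} [Ring R] (f : FreeAlgebra ℤ (ZIdx n) →+* R) (k : ℕ)
    (x : FreeAlgebra ℤ (ZIdx n)) : f (((-1 : ℤ) ^ k) • x) = (-1 : R) ^ k * f x := by
  rw [map_zsmul, zsmul_eq_mul]
  simp

theorem zElem_flip (n i j : ℕ) (h1 : 1 ≤ i) (h2 : i < j) (h3 : j ≤ n) :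
    zElem n j i = (-1) ^ (j - i) * zElem n i j := by
  have hz : zf n j i = ((-1 : ℤ) ^ (j - i)) • zf n i j := by
    unfold zf
    rw [dif_neg (by omega), dif_pos ⟨h1, h2, h3⟩, dif_pos ⟨h1, h2, h3⟩]
  unfold zElem
  rw [hz, map_sgn]

theorem sgn_comm {R : Type*} [Ring R] (k : ℕ) (x : R) : x * (-1) ^ k = (-1) ^ k * x :=
  (((Commute.neg_one_left x).pow_left k).eq).symm

theorem sgn_sq {R : Type*} [Ring R] (k : ℕ) (x : R) : (-1) ^ (k + k) * x = x := by
  rw [Even.neg_one_pow (Even.add_self k), one_mul]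

theorem zElem_contain (n i j a b : ℕ) (h1 : 1 ≤ i) (h2 : i < j) (h3 : j ≤ n)
    (ha : i ≤ a) (hab : a < b) (hb : b ≤ j) :
    zElem n i j * zElem n a b =
      (-1) ^ ((j - i) * (b - a) + (b - a)) * (zElem n (i + j - b) (i + j - a) * zElem n i j) := by
  have h := RingQuot.mkRingHom_rel (ZRel.contain (n := n) i j a b h1 h2 h3 (by omega) hab (by omega)
    (Set.Icc_subset_Icc ha hb))
  rw [map_sgn, map_mul, map_mul] at h
  change zElem n i j * zElem n a b = _ * (zElem n _ _ * zElem n i j) at h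
  rw [h, zElem_flip n (i + j - b) (i + j - a) (by omega) (by omega) (by omega), pow_add]
  have : i + j - a - (i + j - b) = b - a := by omega
  rw [this]
  simp only [mul_assoc]

theorem zElem_disj (n i j a b : ℕ) (h1 : 1 ≤ i) (h2 : i < j) (h3 : j ≤ n)
    (h1' : 1 ≤ a) (h2' : a < b) (h3' : b ≤ n) (hd : Set.Icc i j ∩ Set.Icc a b = ∅) :
    zElem n i j * zElem n a b = (-1) ^ ((j - i) * (b - a)) * (zElem n a b * zElem n i j) := by
  have h := RingQuot.mkRingHom_rel (ZRel.disj (n := n) i j a b h1 h2 h3 h1' h2' h3' hd)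
  rw [map_sgn, map_mul, map_mul] at h
  exact h

/-- The map on the free algebra. -/
noncomputable def preOp (n : ℕ) : FreeAlgebra ℤ (ZIdx n) →ₐ[ℤ] (Zring n)ᵐᵒᵖ :=
  FreeAlgebra.lift ℤ (fun p => MulOpposite.op (zElem n p.1.1 p.1.2))

theorem preOp_zf (n i j : ℕ) (h1 : 1 ≤ i) (h2 : i < j) (h3 : j ≤ n) :
    (preOp n : FreeAlgebra ℤ (ZIdx n) →+* (Zring n)ᵐᵒᵖ) (zf n i j)
      = MulOpposite.op (zElem n i j) := by
  have hz : zf n i j = FreeAlgebra.ι ℤ ⟨(i, j), ⟨h1, h2, h3⟩⟩ := by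
    unfold zf
    rw [dif_pos ⟨h1, h2, h3⟩]
  rw [hz]
  simp [preOp]

theorem preOp_zf_flip (n i j : ℕ) (h1 : 1 ≤ i) (h2 : i < j) (h3 : j ≤ n) :
    (preOp n : FreeAlgebra ℤ (ZIdx n) →+* (Zring n)ᵐᵒᵖ) (zf n j i)
      = (-1) ^ (j - i) * MulOpposite.op (zElem n i j) := by
  have hz : zf n j i = ((-1 : ℤ) ^ (j - i)) • zf n i j := by
    unfold zf
    rw [dif_neg (by omega), dif_pos ⟨h1, h2, h3⟩, dif_pos ⟨h1, h2, h3⟩]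
  rw [hz, map_sgn, preOp_zf n i j h1 h2 h3]

theorem preOp_rel (n : ℕ) (x y : FreeAlgebra ℤ (ZIdx n)) (h : ZRel n x y) :
    (preOp n : FreeAlgebra ℤ (ZIdx n) →+* (Zring n)ᵐᵒᵖ) x
      = (preOp n : FreeAlgebra ℤ (ZIdx n) →+* (Zring n)ᵐᵒᵖ) y := by
  induction h with
  | contain i j a b h1 h2 h3 h1' h2' h3' hsub =>
    obtain ⟨ha, hb⟩ := (Set.Icc_subset_Icc_iff h2'.le).1 hsub
    rw [map_sgn, map_mul, map_mul, preOp_zf n i j h1 h2 h3, preOp_zf n a b h1' h2' h3',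
      preOp_zf_flip n (i + j - b) (i + j - a) (by omega) (by omega) (by omega)]
    apply MulOpposite.unop_injective
    simp only [MulOpposite.unop_mul, MulOpposite.unop_op, MulOpposite.unop_pow,
      MulOpposite.unop_neg, MulOpposite.unop_one]
    have e1 : i + j - a - (i + j - b) = b - a := by omega
    have e2 : i + j - (i + j - a) = a := by omega
    have e3 : i + j - (i + j - b) = b := by omega
    have hc := zElem_contain n i j (i + j - b) (i + j - a) h1 h2 h3 (by omega) (by omega) (by omega)
    rw [e1, e2, e3] at hc
    rw [e1, ← mul_assoc, hc, sgn_comm, sgn_comm, ← mul_assoc, ← mul_assoc, ← pow_add, ← pow_add]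
    exact (sgn_sq _ _).symm
  | disj i j a b h1 h2 h3 h1' h2' h3' hd =>
    rw [map_sgn, map_mul, map_mul, preOp_zf n i j h1 h2 h3, preOp_zf n a b h1' h2' h3']
    apply MulOpposite.unop_injective
    simp only [MulOpposite.unop_mul, MulOpposite.unop_op, MulOpposite.unop_pow,
      MulOpposite.unop_neg, MulOpposite.unop_one]
    rw [zElem_disj n i j a b h1 h2 h3 h1' h2' h3' hd, sgn_comm, ← mul_assoc, ← pow_add]
    exact (sgn_sq _ _).symm
  | overlap i j a b h1 h2 h3 h1' h2' h3' hne hnc1 hnc2 =>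
    rw [map_mul, map_zero, preOp_zf n i j h1 h2 h3, preOp_zf n a b h1' h2' h3']
    apply MulOpposite.unop_injective
    have h := RingQuot.mkRingHom_rel (ZRel.overlap (n := n) a b i j h1' h2' h3' h1 h2 h3
      (by rwa [Set.inter_comm]) hnc2 hnc1)
    rw [map_mul, map_zero] at h
    exact h

/-- The anti-endomorphism of `Z(n)`. -/
noncomputable def antiZ (n : ℕ) : Zring n →+* (Zring n)ᵐᵒᵖ :=
  RingQuot.lift ⟨(preOp n : FreeAlgebra ℤ (ZIdx n) →+* (Zring n)ᵐᵒᵖ), fun {x y} h => preOp_rel n x y h⟩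

theorem antiZ_zElem (n i j : ℕ) (h1 : 1 ≤ i) (h2 : i < j) (h3 : j ≤ n) :
    antiZ n (zElem n i j) = MulOpposite.op (zElem n i j) := by
  unfold antiZ zElem
  rw [RingQuot.lift_mkRingHom_apply]
  exact preOp_zf n i j h1 h2 h3

/-- The square of the anti-endomorphism. -/
noncomputable def antiSq (n : ℕ) : Zring n →+* Zring n :=
  ((RingEquiv.opOp (Zring n)).symm : (Zring n)ᵐᵒᵖᵐᵒᵖ →+* Zring n).comp
    ((RingHom.op (antiZ n)).comp (antiZ n))

theorem antiSq_apply (n : ℕ) (x : Zring n) :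
    antiSq n x = (antiZ n (antiZ n x).unop).unop := rfl

theorem antiSq_eq (n : ℕ) : antiSq n = RingHom.id (Zring n) := by
  apply RingQuot.ringQuot_ext
  have key : ((antiSq n).comp (RingQuot.mkRingHom (ZRel n))).toIntAlgHom
      = ((RingHom.id (Zring n)).comp (RingQuot.mkRingHom (ZRel n))).toIntAlgHom := by
    apply FreeAlgebra.hom_ext
    funext p
    obtain ⟨⟨i, j⟩, h1, h2, h3⟩ := p
    have hz : FreeAlgebra.ι ℤ ⟨(i, j), ⟨h1, h2, h3⟩⟩ = zf n i j := by
      unfold zf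
      rw [dif_pos ⟨h1, h2, h3⟩]
    change antiSq n (RingQuot.mkRingHom (ZRel n) (FreeAlgebra.ι ℤ ⟨(i, j), ⟨h1, h2, h3⟩⟩))
      = RingQuot.mkRingHom (ZRel n) (FreeAlgebra.ι ℤ ⟨(i, j), ⟨h1, h2, h3⟩⟩)
    rw [hz]
    change antiSq n (zElem n i j) = zElem n i j
    rw [antiSq_apply, antiZ_zElem n i j h1 h2 h3, MulOpposite.unop_op,
      antiZ_zElem n i j h1 h2 h3, MulOpposite.unop_op]
  ext x
  exact DFunLike.congr_fun key x

theorem antiZ_invol (n : ℕ) (x : Zring n) : (antiZ n (antiZ n x).unop).unop = x := by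
  rw [← antiSq_apply, antiSq_eq]
  rfl

/-- There is a ring isomorphism from `Z(n)` to its opposite ring fixing all
the generators `z_{i,j}`; i.e. the identity on generators extends to an involutory
anti-automorphism of `Z(n)`. -/
theorem Zring_iso_opposite (n : ℕ) (hn : 2 ≤ n) :
    ∃ e : Zring n ≃+* (Zring n)ᵐᵒᵖ,
      ∀ i j : ℕ, 1 ≤ i → i < j → j ≤ n →
        e (zElem n i j) = MulOpposite.op (zElem n i j) := by
  refine ⟨RingEquiv.ofBijective (antiZ n) ⟨?_, ?_⟩, ?_⟩
  · intro x y hxy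
    rw [← antiZ_invol n x, ← antiZ_invol n y, hxy]
  · intro y
    exact ⟨(antiZ n y.unop).unop, MulOpposite.unop_injective (antiZ_invol n y.unop)⟩
  · intro i j h1 h2 h3
    exact antiZ_zElem n i j h1 h2 h3
end

section
/- In N(n), suppose 1 ≤ i ≤ i' < j' ≤ n, i < j ≤ n, 0 ≤ k ≤ j − j', and 0 ≤ k' ≤ j' − i'. Then Y_{[i',j'];k'} Y_{[i,j];k} = Y_{[i,j];k} Y_{[i'+k, j'+k];k'}. -/
/-- Index type for the generators `Y_1, …, Y_{n-1}` of the nilCoxeter algebra `N(n)`. -/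
abbrev NIdx (n : ℕ) := {i : ℕ // 1 ≤ i ∧ i + 1 ≤ n}

/-- The generator `Y_i` in the free algebra (junk value `0` outside `1 ≤ i ≤ n-1`). -/
noncomputable def Yf (n : ℕ) (i : ℕ) : FreeAlgebra ℤ (NIdx n) :=
  if h : 1 ≤ i ∧ i + 1 ≤ n then FreeAlgebra.ι ℤ ⟨i, h⟩ else 0

/-- The defining relations of the nilCoxeter algebra `N(n)` of the symmetric group `S_n`:
`Y_i² = 0`, the braid relations `Y_i Y_{i+1} Y_i = Y_{i+1} Y_i Y_{i+1}`, and the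
commutation relations `Y_i Y_j = Y_j Y_i` for `|i - j| ≥ 2`. -/
inductive NRel (n : ℕ) : FreeAlgebra ℤ (NIdx n) → FreeAlgebra ℤ (NIdx n) → Prop
  | sq (i : NIdx n) : NRel n (FreeAlgebra.ι ℤ i * FreeAlgebra.ι ℤ i) 0
  | braid (i j : NIdx n) (h : j.1 = i.1 + 1) :
      NRel n (FreeAlgebra.ι ℤ i * FreeAlgebra.ι ℤ j * FreeAlgebra.ι ℤ i)
        (FreeAlgebra.ι ℤ j * FreeAlgebra.ι ℤ i * FreeAlgebra.ι ℤ j)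
  | comm (i j : NIdx n) (h : i.1 + 2 ≤ j.1 ∨ j.1 + 2 ≤ i.1) :
      NRel n (FreeAlgebra.ι ℤ i * FreeAlgebra.ι ℤ j)
        (FreeAlgebra.ι ℤ j * FreeAlgebra.ι ℤ i)

/-- The nilCoxeter algebra `N(n)` of the symmetric group `S_n` over `ℤ`. -/
abbrev Nring (n : ℕ) := RingQuot (NRel n)

/-- The image of the generator `Y_i` in `N(n)`. -/
noncomputable def Ygen (n : ℕ) (i : ℕ) : Nring n :=
  RingQuot.mkRingHom (NRel n) (Yf n i)

/-- `Y_{[i,j]} = Y_{j-1} Y_{j-2} ⋯ Y_{i+1} Y_i`, with `Y_{[i,i]} = 1`. -/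
noncomputable def Yint (n : ℕ) (i j : ℕ) : Nring n :=
  (((List.range' i (j - i)).reverse).map (Ygen n)).prod

/-- `Y_{[i,j];k} = Y_{[i,j+1-k]} Y_{[i+1,j+2-k]} ⋯ Y_{[i+k-1,j]}`, with `Y_{[i,j];0} = 1`. -/
noncomputable def Yintk (n : ℕ) (i j k : ℕ) : Nring n :=
  ((List.range k).map fun t => Yint n (i + t) (j + 1 - k + t)).prod

theorem Ygen_comm (n a b : ℕ) (h : a + 2 ≤ b) : Commute (Ygen n a) (Ygen n b) := by
  unfold Ygen Yf Commute SemiconjBy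
  split_ifs with h1 h2
  · rw [← map_mul, ← map_mul]
    exact RingQuot.mkRingHom_rel (NRel.comm _ _ (Or.inl h))
  all_goals simp

theorem Ygen_braid (n a : ℕ) (h1 : 1 ≤ a) (h2 : a + 2 ≤ n) :
    Ygen n a * Ygen n (a + 1) * Ygen n a = Ygen n (a + 1) * Ygen n a * Ygen n (a + 1) := by
  unfold Ygen Yf
  rw [dif_pos ⟨h1, by omega⟩, dif_pos ⟨by omega, by omega⟩]
  simp only [← map_mul]
  exact RingQuot.mkRingHom_rel (NRel.braid _ _ rfl)

theorem Yint_succ (n a b : ℕ) (h : a ≤ b) : Yint n a (b + 1) = Ygen n b * Yint n a b := by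
  unfold Yint
  have e : b + 1 - a = (b - a) + 1 := by omega
  have e' : a + (b - a) = b := by omega
  rw [e, List.range'_concat]
  simp [e']

theorem Yint_comm_high (n a b c : ℕ) (h : b + 1 ≤ c) : Commute (Yint n a b) (Ygen n c) := by
  unfold Yint
  apply Commute.list_prod_left
  intro x hx
  simp only [List.mem_map, List.mem_reverse, List.mem_range'_1] at hx
  obtain ⟨y, hy, rfl⟩ := hx
  exact Ygen_comm n y c (by omega)

theorem Yint_semiconj (n a m d : ℕ) (h1 : 1 ≤ a) (h2 : a ≤ m) (h : m + 2 + d ≤ n) :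
    SemiconjBy (Yint n a (m + 2 + d)) (Ygen n (m + 1)) (Ygen n m) := by
  induction d with
  | zero =>
    have hb := Ygen_braid n m (by omega) (by omega)
    have hc := (Yint_comm_high n a m (m + 1) le_rfl).eq
    rw [Nat.add_zero, Yint_succ n a (m + 1) (by omega), Yint_succ n a m h2]
    unfold SemiconjBy
    rw [mul_assoc, mul_assoc, hc]
    simp only [← mul_assoc]
    rw [hb]
  | succ d ih =>
    rw [← Nat.add_assoc, Yint_succ n a (m + 2 + d) (by omega)]
    exact SemiconjBy.mul_left (Ygen_comm n m (m + 2 + d) (by omega)).symm (ih (by omega))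

theorem Yintk_semiconj (n i j k m : ℕ) (h1 : 1 ≤ i) (h2 : i ≤ m) (h : m + 1 + k ≤ j)
    (hj : j ≤ n) : SemiconjBy (Yintk n i j k) (Ygen n (m + k)) (Ygen n m) := by
  unfold Yintk
  have key : ∀ s, s ≤ k → SemiconjBy
      ((List.range s).map fun t => Yint n (i + t) (j + 1 - k + t)).prod
      (Ygen n (m + s)) (Ygen n m) := by
    intro s
    induction s with
    | zero => intro _; simp
    | succ s ih =>
      intro hs
      rw [List.range_succ, List.map_append, List.prod_append]
      refine SemiconjBy.mul_left (ih (by omega)) ?_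
      have := Yint_semiconj n (i + s) (m + s) (j + 1 - k - (m + 2)) (by omega) (by omega)
        (by omega)
      have e : m + s + 2 + (j + 1 - k - (m + 2)) = j + 1 - k + s := by omega
      rw [e] at this
      simpa [Nat.add_assoc] using this
  exact key k le_rfl

theorem semiconj_list_prod {M ι : Type*} [Monoid M] (A : M) (f g : ι → M) (l : List ι)
    (h : ∀ x ∈ l, SemiconjBy A (f x) (g x)) :
    SemiconjBy A (l.map f).prod (l.map g).prod := by
  induction l with
  | nil => simp
  | cons x l ih =>
    simp only [List.map_cons, List.prod_cons]
    exact (h x (by simp)).mul_right (ih fun y hy => h y (by simp [hy]))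

theorem Yint_shift (n a b k : ℕ) :
    Yint n (a + k) (b + k) = (((List.range' a (b - a)).reverse).map fun m => Ygen n (m + k)).prod := by
  unfold Yint
  have e : b + k - (a + k) = b - a := by omega
  have e2 : List.range' (a + k) (b - a) = (List.range' a (b - a)).map (· + k) := by
    have := List.map_add_range' (a := k) a (b - a) 1
    rw [Nat.add_comm a k, ← this]
    simp [Nat.add_comm]
  rw [e, e2, ← List.map_reverse, List.map_map]
  rfl

/-- In `N(n)`, if `1 ≤ i ≤ i' < j' ≤ n`, `i < j ≤ n`, `k ≤ j - j'` and
`k' ≤ j' - i'`, then `Y_{[i',j'];k'} Y_{[i,j];k} = Y_{[i,j];k} Y_{[i'+k,j'+k];k'}`. -/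
theorem Yintk_commute (n : ℕ) (hn : 2 ≤ n) (i j i' j' k k' : ℕ)
    (h1 : 1 ≤ i) (h2 : i ≤ i') (h3 : i' < j') (h4 : j' ≤ n)
    (h5 : i < j) (h6 : j ≤ n) (h7 : k ≤ j - j') (h8 : k' ≤ j' - i') :
    Yintk n i' j' k' * Yintk n i j k = Yintk n i j k * Yintk n (i' + k) (j' + k) k' := by
  by_cases hk : k = 0
  · subst hk
    simp [Yintk]
  symm
  change SemiconjBy (Yintk n i j k) (Yintk n (i' + k) (j' + k) k') (Yintk n i' j' k')
  rw [Yintk.eq_1 n (i' + k), Yintk.eq_1 n i']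
  apply semiconj_list_prod
  intro t ht
  rw [List.mem_range] at ht
  have e1 : i' + k + t = i' + t + k := by omega
  have e2 : j' + k + 1 - k' + t = j' + 1 - k' + t + k := by omega
  rw [e1, e2, Yint_shift, Yint.eq_1 n (i' + t)]
  apply semiconj_list_prod
  intro m hm
  rw [List.mem_reverse, List.mem_range'_1] at hm
  exact Yintk_semiconj n i j k m h1 (by omega) (by omega) h6
end
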